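/- arXiv:0801.3109 — 2 statements merged into one kernel-verified Lean document; each statement's English description precedes it below -/
import Mathlib

section
/- Let T_{(α,α')} be the translation of the two-torus T² by the vector (α,α'), where α, α' are irrational with types γ = γ(α) and γ' = γ(α'). Then for each x₀ ∈ T², for Lebesgue-almost every x ∈ T², the upper hitting time indicator satisfies R̄(x,x₀) ≥ max(γ, γ'). -/
/-!
The lower bound already holds for each coordinate rotation separately: a visit of the torus orbit
to a sup-metric ball forces a visit of each coordinate to the ball of the same radius, and the
coordinate projections preserve null sets.

For a rotation of the circle by `a`, let `0 < δ < β` and suppose `‖q a‖ ≤ q ^ (-β)` for infinitely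
many `q`. Take `r = q ^ (-(1 + ε))` with `(1 + ε) δ < β`. The orbit up to time
`r ^ (-δ) = q ^ ((1 + ε) δ)` stays close to its first `q` points, because writing `n = q k + j` moves
the `j`-th point by at most `k ‖q a‖`. Hence the points which enter a given ball of radius `r`
before that time are covered by `q` intervals of total length at most
`2 (q ^ (-ε) + q ^ ((1 + ε) δ - β))`, see `volume_earlySet_le`. This tends to `0`, so almost every
point lies outside infinitely many of these sets (`ae_frequently_notMem`), which gives
`τ_r ≥ r ^ (-δ)` for arbitrarily small `r`. No summability is needed, since the statement only
concerns an upper limit.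
-/

open Filter MeasureTheory Metric Topology ENNReal

/-- Hitting time of the orbit of `x` into the ball `B(x₀,r)` (as extended natural, `⊤` if never). -/
noncomputable def hitTime {X : Type*} [PseudoMetricSpace X] (T : X → X) (x x₀ : X) (r : ℝ) : ℕ∞ :=
  sInf {N : ℕ∞ | ∃ n : ℕ, N = n ∧ 1 ≤ n ∧ T^[n] x ∈ Metric.ball x₀ r}

/-- The ratio `log τ_r(x,x₀) / (- log r)`, with values in the extended reals. -/
noncomputable def hitRatio {X : Type*} [PseudoMetricSpace X] (T : X → X) (x x₀ : X) (r : ℝ) :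
    EReal :=
  ENNReal.log ((hitTime T x x₀ r : ℕ∞) : ℝ≥0∞) / ((-Real.log r : ℝ) : EReal)

/-- Upper hitting time indicator `R̄(x,x₀)`. -/
noncomputable def Rupper {X : Type*} [PseudoMetricSpace X] (T : X → X) (x x₀ : X) : EReal :=
  limsup (hitRatio T x x₀) (𝓝[>] (0:ℝ))

/-- Lower hitting time indicator `R̲(x,x₀)`. -/
noncomputable def Rlower {X : Type*} [PseudoMetricSpace X] (T : X → X) (x x₀ : X) : EReal :=
  liminf (hitRatio T x x₀) (𝓝[>] (0:ℝ))

/-- The ratio `log μ(B(x₀,r)) / log r`, with values in the extended reals. -/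
noncomputable def dimRatio {X : Type*} [PseudoMetricSpace X] [MeasurableSpace X]
    (μ : Measure X) (x₀ : X) (r : ℝ) : EReal :=
  ENNReal.log (μ (Metric.ball x₀ r)) / ((Real.log r : ℝ) : EReal)

/-- Upper local dimension of `μ` at `x₀`. -/
noncomputable def dimUpper {X : Type*} [PseudoMetricSpace X] [MeasurableSpace X]
    (μ : Measure X) (x₀ : X) : EReal :=
  limsup (dimRatio μ x₀) (𝓝[>] (0:ℝ))

/-- Lower local dimension of `μ` at `x₀`. -/
noncomputable def dimLower {X : Type*} [PseudoMetricSpace X] [MeasurableSpace X]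
    (μ : Measure X) (x₀ : X) : EReal :=
  liminf (dimRatio μ x₀) (𝓝[>] (0:ℝ))

/-- Correlation-decay inequality for all (bounded) Lipschitz observables, where the Lipschitz
norm of an observable is (a bound on) its sup norm plus (a bound on) its Lipschitz constant. -/
def CorrDecayWith {X : Type*} [PseudoMetricSpace X] [MeasurableSpace X]
    (T : X → X) (μ : Measure X) (Φ : ℕ → ℝ) : Prop :=
  ∀ (φ ψ : X → ℝ) (Kφ Kψ : NNReal) (Bφ Bψ : ℝ),
    LipschitzWith Kφ φ → LipschitzWith Kψ ψ →
    (∀ x, |φ x| ≤ Bφ) → (∀ x, |ψ x| ≤ Bψ) →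
    ∀ n : ℕ,
      |(∫ x, φ (T^[n] x) * ψ x ∂μ) - (∫ x, φ x ∂μ) * ∫ x, ψ x ∂μ| ≤
        (Bφ + Kφ) * (Bψ + Kψ) * Φ n

/-- Decay of correlations with power law speed of exponent `p`. -/
def PowerLawDecay {X : Type*} [PseudoMetricSpace X] [MeasurableSpace X]
    (T : X → X) (μ : Measure X) (p : ℝ) : Prop :=
  ∃ Φ : ℕ → ℝ, (∀ n, 0 ≤ Φ n) ∧
    Tendsto (fun n : ℕ => -Real.log (Φ n) / Real.log n) atTop (𝓝 p) ∧
    CorrDecayWith T μ Φ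

/-- Denominators of the convergents of the continued fraction expansion of `α`. -/
noncomputable def cfDen (α : ℝ) (n : ℕ) : ℝ := (GenContFract.of α).dens n

/-- Distance of a real number to the nearest integer. -/
noncomputable def intDist (x : ℝ) : ℝ := |x - round x|

/-- The type (Diophantine exponent) of an irrational number `α`:
`γ(α) = sup {β : liminf_{q→∞} q^β ‖qα‖ = 0}` (as an extended real). -/
noncomputable def diophType (α : ℝ) : EReal :=
  sSup {x : EReal | ∃ β : ℝ, x = (β : EReal) ∧
    liminf (fun q : ℕ => ENNReal.ofReal ((q : ℝ) ^ β * intDist (q * α))) atTop = 0}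

/-- If the sets `E q` have measure tending to zero along infinitely many indices `q`, then almost
every point is outside infinitely many of them. -/
lemma ae_frequently_notMem {X : Type*} [MeasurableSpace X] (μ : Measure X) (E : ℕ → Set X)
    (P : ℕ → Prop) (f : ℕ → ℝ≥0∞) (hP : ∃ᶠ q in atTop, P q) (hE : ∀ q, P q → μ (E q) ≤ f q)
    (hf : Tendsto f atTop (𝓝 0)) :
    ∀ᵐ x ∂μ, ∃ᶠ q in atTop, P q ∧ x ∉ E q := by
  simp only [frequently_atTop]
  rw [ae_all_iff]
  intro m
  rw [ae_iff]
  refine le_antisymm ?_ bot_le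
  refine ge_of_tendsto_of_frequently hf ?_
  refine (hP.and_eventually (eventually_ge_atTop m)).mono ?_
  rintro q ⟨hq, hmq⟩
  refine (measure_mono ?_).trans (hE q hq)
  intro x hx
  by_contra hxE
  exact hx ⟨q, hmq, hq, hxE⟩

/-- The points of the circle whose orbit under rotation by `a` visits the ball of radius `r`
around `y₀` at some time `1 ≤ n < N`. -/
def earlySet (a y₀ : AddCircle (1:ℝ)) (r N : ℝ) : Set (AddCircle (1:ℝ)) :=
  {y | ∃ n : ℕ, 1 ≤ n ∧ (n : ℝ) < N ∧ dist (y + n • a) y₀ < r}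

/-- The orbit up to time `N` clusters around its first `q` points, at distance at most
`(N / q) ‖q a‖`. -/
lemma volume_earlySet_le (a y₀ : AddCircle (1:ℝ)) (r N : ℝ) (q : ℕ) (hq : 0 < q) :
    volume (earlySet a y₀ r N) ≤ ENNReal.ofReal (2 * (q * r + N * ‖q • a‖)) := by
  have hq' : (0:ℝ) < q := by exact_mod_cast hq
  set ρ : ℝ := r + N / q * ‖q • a‖ with hρ
  have hsub : earlySet a y₀ r N ⊆
      ⋃ j ∈ Finset.range q, closedBall (y₀ - j • a) ρ := by
    rintro y ⟨n, -, hnN, hd⟩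
    simp only [Set.mem_iUnion, Finset.mem_range, exists_prop]
    refine ⟨n % q, Nat.mod_lt _ hq, ?_⟩
    rw [mem_closedBall, dist_eq_norm]
    rw [dist_eq_norm] at hd
    have hn : n • a = (n % q) • a + (n / q) • (q • a) := by
      rw [smul_smul, ← add_smul, mul_comm, Nat.mod_add_div]
    have hk : ((n / q : ℕ) : ℝ) ≤ N / q :=
      Nat.cast_div_le.trans (by gcongr)
    have h1 : y - (y₀ - (n % q) • a) = (y + n • a - y₀) - (n / q) • (q • a) := by
      rw [hn]; abel
    rw [h1]
    refine (norm_sub_le _ _).trans (add_le_add hd.le ?_)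
    exact (norm_nsmul_le).trans (mul_le_mul_of_nonneg_right hk (norm_nonneg _))
  refine (measure_mono hsub).trans ((measure_biUnion_finset_le _ _).trans ?_)
  simp only [AddCircle.volume_closedBall]
  rw [Finset.sum_const, Finset.card_range, nsmul_eq_mul, ← ENNReal.ofReal_natCast,
    ← ENNReal.ofReal_mul hq'.le]
  apply ENNReal.ofReal_le_ofReal
  have h2 : (q:ℝ) * (2 * ρ) = 2 * (q * r + N * ‖q • a‖) := by
    rw [hρ]; field_simp
  rw [← h2]
  exact mul_le_mul_of_nonneg_left (min_le_right _ _) hq'.le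

/-- For a rotation by `α`, any exponent `δ` below the type of `α` is a lower bound for hitting
times, at arbitrarily small scales and for almost every starting point. -/
lemma ae_frequently_hit_ge (α δ : ℝ) (hδ : (δ : EReal) < diophType α) (y₀ : AddCircle (1:ℝ)) :
    ∀ᵐ y ∂(volume : Measure (AddCircle (1:ℝ))), ∃ᶠ r in 𝓝[>] (0:ℝ),
      ∀ n : ℕ, 1 ≤ n → dist (y + n • (α : AddCircle (1:ℝ))) y₀ < r → r ^ (-δ) ≤ n := by
  rcases le_or_gt δ 0 with hδ0 | hδ0
  -- For `δ ≤ 0` and `r < 1` the bound `r ^ (-δ) ≤ 1 ≤ n` is trivial.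
  · refine Eventually.of_forall fun y => Eventually.frequently ?_
    have : ∀ᶠ r in 𝓝[>] (0:ℝ), r ∈ Set.Ioo (0:ℝ) 1 := Ioo_mem_nhdsGT one_pos
    filter_upwards [this] with r hr n hn _
    exact (Real.rpow_le_one hr.1.le hr.2.le (by linarith)).trans (by exact_mod_cast hn)
  obtain ⟨_, ⟨β, rfl, hβ⟩, hδβ⟩ := lt_sSup_iff.1 hδ
  have hδβ : δ < β := by exact_mod_cast hδβ
  obtain ⟨ε, hε, hεβ⟩ : ∃ ε : ℝ, 0 < ε ∧ (1 + ε) * δ < β := by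
    -- This choice makes `(1 + ε) * δ` the midpoint of `δ` and `β`.
    refine ⟨(β - δ) / (2 * δ), by apply div_pos <;> linarith, ?_⟩
    have : (1 + (β - δ) / (2 * δ)) * δ = δ + (β - δ) / 2 := by field_simp
    linarith
  set r : ℕ → ℝ := fun q => (q:ℝ) ^ (-(1 + ε)) with hr
  have hfreq : ∃ᶠ q : ℕ in atTop, 0 < q ∧ ‖q • (α : AddCircle (1:ℝ))‖ ≤ (q:ℝ) ^ (-β) := by
    have h1 := frequently_lt_of_liminf_lt (b := (1 : ℝ≥0∞)) (by isBoundedDefault)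
      (hβ.trans_lt one_pos)
    refine (h1.and_eventually (eventually_gt_atTop 0)).mono ?_
    rintro q ⟨hq1, hq⟩
    have hq' : (0:ℝ) < q := by exact_mod_cast hq
    refine ⟨hq, ?_⟩
    have h2 : ‖q • (α : AddCircle (1:ℝ))‖ = intDist (q * α) := by
      rw [← AddCircle.coe_nsmul, nsmul_eq_mul, UnitAddCircle.norm_eq]; rfl
    rw [ENNReal.ofReal_lt_one] at hq1
    rw [h2, Real.rpow_neg hq'.le, ← one_div, le_div_iff₀ (by positivity), mul_comm]
    exact hq1.le
  have hrt : Tendsto r atTop (𝓝[>] 0) := by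
    refine tendsto_nhdsWithin_iff.2 ⟨?_, ?_⟩
    · exact (tendsto_rpow_neg_atTop (by linarith)).comp tendsto_natCast_atTop_atTop
    · filter_upwards [eventually_gt_atTop 0] with q hq
      have hq' : (0:ℝ) < q := by exact_mod_cast hq
      exact Real.rpow_pos_of_pos hq' _
  have hft : Tendsto (fun q : ℕ => ENNReal.ofReal
      (2 * ((q:ℝ) ^ (-ε) + (q:ℝ) ^ (-(β - (1 + ε) * δ))))) atTop (𝓝 0) := by
    rw [← ENNReal.ofReal_zero]
    refine ENNReal.tendsto_ofReal ?_
    have h1 := (tendsto_rpow_neg_atTop hε).comp (tendsto_natCast_atTop_atTop (R := ℝ))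
    have h2 := (tendsto_rpow_neg_atTop (sub_pos.2 hεβ)).comp (tendsto_natCast_atTop_atTop (R := ℝ))
    simpa using (h1.add h2).const_mul 2
  have key := ae_frequently_notMem volume
    (fun q => earlySet (α : AddCircle (1:ℝ)) y₀ (r q) (r q ^ (-δ))) _ _ hfreq ?_ hft
  · filter_upwards [key] with y hy
    refine hrt.frequently (hy.mono ?_)
    rintro q ⟨-, hq⟩ n hn hd
    by_contra! hlt
    exact hq ⟨n, hn, hlt, hd⟩
  · rintro q ⟨hq, hqa⟩
    have hq' : (0:ℝ) < q := by exact_mod_cast hq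
    refine (volume_earlySet_le _ _ _ _ q hq).trans (ENNReal.ofReal_le_ofReal ?_)
    have e1 : (q:ℝ) * r q = (q:ℝ) ^ (-ε) := by
      rw [hr]
      nth_rewrite 1 [← Real.rpow_one (q:ℝ)]
      rw [← Real.rpow_add hq']
      congr 1; ring
    have e2 : r q ^ (-δ) = (q:ℝ) ^ ((1 + ε) * δ) := by
      rw [hr, ← Real.rpow_mul hq'.le]
      congr 1; ring
    have e3 : (q:ℝ) ^ (-(β - (1 + ε) * δ)) = (q:ℝ) ^ ((1 + ε) * δ) * (q:ℝ) ^ (-β) := by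
      rw [← Real.rpow_add hq']
      congr 1; ring
    rw [e1, e2, e3]
    gcongr

lemma le_hitRatio {X : Type*} [PseudoMetricSpace X] (T : X → X) (x x₀ : X) (r δ : ℝ)
    (hr0 : 0 < r) (hr1 : r < 1)
    (h : ∀ n : ℕ, 1 ≤ n → dist (T^[n] x) x₀ < r → r ^ (-δ) ≤ n) :
    (δ : EReal) ≤ hitRatio T x x₀ r := by
  have hlog : 0 < -Real.log r := neg_pos.2 (Real.log_neg hr0 hr1)
  have hle : ENNReal.ofReal (r ^ (-δ)) ≤ ((hitTime T x x₀ r : ℕ∞) : ℝ≥0∞) := by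
    unfold hitTime
    rcases Set.eq_empty_or_nonempty
      {N : ℕ∞ | ∃ n : ℕ, N = n ∧ 1 ≤ n ∧ T^[n] x ∈ Metric.ball x₀ r} with he | hne
    · rw [he]; simp
    · obtain ⟨n, hn, hn1, hmem⟩ := csInf_mem hne
      rw [hn, ENat.toENNReal_coe, ← ENNReal.ofReal_natCast]
      exact ENNReal.ofReal_le_ofReal (h n hn1 hmem)
  unfold hitRatio
  rw [EReal.le_div_iff_mul_le (by exact_mod_cast hlog) (EReal.coe_ne_top _)]
  refine le_trans ?_ (ENNReal.log_monotone hle)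
  rw [ENNReal.log_ofReal_of_pos (Real.rpow_pos_of_pos hr0 _), Real.log_rpow hr0]
  exact_mod_cast (by linarith : δ * -Real.log r ≤ -δ * Real.log r)

lemma iterate_translation (a b : AddCircle (1:ℝ)) (x : AddCircle (1:ℝ) × AddCircle (1:ℝ))
    (n : ℕ) :
    (fun p : AddCircle (1:ℝ) × AddCircle (1:ℝ) => (p.1 + a, p.2 + b))^[n] x =
      (x.1 + n • a, x.2 + n • b) := by
  induction n with
  | zero => simp
  | succ n ih => rw [Function.iterate_succ_apply', ih]; simp only [succ_nsmul, add_assoc]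

/-- A lower bound on the hitting times of a single coordinate, along arbitrarily small radii, is
inherited by the upper hitting time indicator of the translation. -/
lemma le_Rupper_of_coord (a b c y₀ y : AddCircle (1:ℝ))
    (x x₀ : AddCircle (1:ℝ) × AddCircle (1:ℝ)) (δ : ℝ)
    (hcoord : ∀ n : ℕ, dist (y + n • c) y₀ ≤ dist (x.1 + n • a, x.2 + n • b) x₀)
    (h : ∃ᶠ r in 𝓝[>] (0:ℝ), ∀ n : ℕ, 1 ≤ n → dist (y + n • c) y₀ < r → r ^ (-δ) ≤ n) :
    (δ : EReal) ≤ Rupper (fun p => (p.1 + a, p.2 + b)) x x₀ := by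
  refine le_limsup_of_frequently_le ?_ (by isBoundedDefault)
  have h01 : ∀ᶠ r in 𝓝[>] (0:ℝ), r ∈ Set.Ioo (0:ℝ) 1 := Ioo_mem_nhdsGT one_pos
  refine (h.and_eventually h01).mono ?_
  rintro r ⟨hr, hr0, hr1⟩
  refine le_hitRatio _ _ _ _ _ hr0 hr1 fun n hn hd => hr n hn ?_
  rw [iterate_translation] at hd
  exact (hcoord n).trans_lt hd

lemma le_of_forall_rat_lt {u v : EReal} (h : ∀ c : ℚ, ((c : ℝ) : EReal) < u →
    ((c : ℝ) : EReal) ≤ v) : u ≤ v := by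
  by_contra! hlt
  obtain ⟨c, hc1, hc2⟩ := EReal.lt_iff_exists_rat_btwn.1 hlt
  exact absurd (h c hc2) (not_le.2 hc1)

/-- For the translation of the two-torus by irrationals `(α, α')` of types `γ, γ'`, for each
`x₀` and Lebesgue-almost every `x`, the upper hitting time indicator is `≥ max(γ, γ')`. -/
theorem stmt_5 (α α' : ℝ) (hα : Irrational α) (hα' : Irrational α')
    (x₀ : AddCircle (1:ℝ) × AddCircle (1:ℝ)) :
    ∀ᵐ x ∂(volume : Measure (AddCircle (1:ℝ) × AddCircle (1:ℝ))),
      max (diophType α) (diophType α') ≤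
        Rupper (fun p => (p.1 + (α : AddCircle (1:ℝ)), p.2 + (α' : AddCircle (1:ℝ)))) x x₀ := by
  -- Rational exponents suffice, so only countably many null sets are discarded.
  have h1 : ∀ᵐ x ∂(volume : Measure (AddCircle (1:ℝ) × AddCircle (1:ℝ))),
      ∀ c : ℚ, ((c : ℝ) : EReal) < diophType α → ((c : ℝ) : EReal) ≤
        Rupper (fun p => (p.1 + (α : AddCircle (1:ℝ)), p.2 + (α' : AddCircle (1:ℝ)))) x x₀ := by
    refine ae_all_iff.2 fun c => ?_
    by_cases hc : ((c : ℝ) : EReal) < diophType α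
    · have := (Measure.quasiMeasurePreserving_fst (μ := (volume : Measure (AddCircle (1:ℝ))))
        (ν := (volume : Measure (AddCircle (1:ℝ))))).ae (ae_frequently_hit_ge α c hc x₀.1)
      filter_upwards [this] with x hx _
      exact le_Rupper_of_coord _ _ _ _ _ x x₀ c
        (fun n => by rw [Prod.dist_eq]; exact le_max_left _ _) hx
    · exact Eventually.of_forall fun x h => absurd h hc
  have h2 : ∀ᵐ x ∂(volume : Measure (AddCircle (1:ℝ) × AddCircle (1:ℝ))),
      ∀ c : ℚ, ((c : ℝ) : EReal) < diophType α' → ((c : ℝ) : EReal) ≤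
        Rupper (fun p => (p.1 + (α : AddCircle (1:ℝ)), p.2 + (α' : AddCircle (1:ℝ)))) x x₀ := by
    refine ae_all_iff.2 fun c => ?_
    by_cases hc : ((c : ℝ) : EReal) < diophType α'
    · have := (Measure.quasiMeasurePreserving_snd (μ := (volume : Measure (AddCircle (1:ℝ))))
        (ν := (volume : Measure (AddCircle (1:ℝ))))).ae (ae_frequently_hit_ge α' c hc x₀.2)
      filter_upwards [this] with x hx _
      exact le_Rupper_of_coord _ _ _ _ _ x x₀ c
        (fun n => by rw [Prod.dist_eq]; exact le_max_right _ _) hx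
    · exact Eventually.of_forall fun x h => absurd h hc
  filter_upwards [h1, h2] with x hx1 hx2
  exact max_le (le_of_forall_rat_lt hx1) (le_of_forall_rat_lt hx2)
end

section
/- Let T_α : x ↦ x + α be an irrational rotation of the circle S¹ = ℝ/ℤ with Lebesgue probability measure μ, with continued fraction convergent denominators q_n, and let τ_r^α(x) denote the hitting time of the orbit of x into the ball of radius r centered at 0. Let β, M, N ≥ 1 and suppose r > 0 is such that for some n ≥ 1, ‖q_n α‖ < M ‖q_n α‖^{1/β} ≤ 2r ≤ (1/N) ‖q_{n−1} α‖ < ‖q_{n−1} α‖. Then μ{x ∈ S¹ : τ_r^α(x) < (2r)^{−β}} ≤ 1/N + 1/M^β. -/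
/-!
Write `q = qₙ`, `e = qα - round (qα)`, `δ = |e| = ‖qα‖` and `c = (2r)^{-β}`. A point `x` with
hitting time below `c` lies in `B(-kα, r)` for some `k < c`. Division with remainder `k = a + q b`
gives `-kα = -aα - b e` modulo `1` with `0 ≤ b ≤ c / q`, so for fixed `a < q` all these balls lie in
one closed ball of radius `r + (c / q) δ / 2`, centred halfway along the drift of length `(c / q) δ`.
Hence the measure is at most `q (2r + (c / q) δ) = q · 2r + c δ`.

The first term is at most `1 / N` because `2r ≤ ‖qₙ₋₁α‖ / N` and `qₙ ‖qₙ₋₁α‖ ≤ 1`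
(`cfDen_succ_mul_intDist_le_one`); the second is at most `1 / M^β` because
`M δ^{1/β} ≤ 2r` raised to the power `β` reads `M^β δ ≤ (2r)^β = 1 / c`.
-/

open Filter MeasureTheory Metric Topology ENNReal

/-- The continuants of the continued fraction of a real number are integers. -/
lemma exists_int_contsAux (α : ℝ) (n : ℕ) :
    ∃ a b : ℤ, (GenContFract.of α).contsAux n = ⟨(a : ℝ), (b : ℝ)⟩ := by
  induction n using Nat.strong_induction_on with
  | _ n ih =>
    match n with
    | 0 => exact ⟨1, 0, by simp [GenContFract.contsAux]⟩
    | 1 => exact ⟨⌊α⌋, 1, by simp [GenContFract.contsAux, GenContFract.of_h_eq_floor]⟩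
    | m + 2 =>
      obtain ⟨a₁, b₁, h₁⟩ := ih (m + 1) (by omega)
      obtain ⟨a₀, b₀, h₀⟩ := ih m (by omega)
      rcases hs : (GenContFract.of α).s.get? m with _ | gp
      · refine ⟨a₁, b₁, ?_⟩
        rw [← h₁]
        exact GenContFract.contsAux_stable_step_of_terminated hs
      · obtain ⟨ha, z, hz⟩ := GenContFract.of_partNum_eq_one_and_exists_int_partDen_eq hs
        refine ⟨z * a₁ + a₀, z * b₁ + b₀, ?_⟩
        rw [GenContFract.contsAux_recurrence hs h₀ h₁, ha, hz]
        push_cast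
        simp

lemma not_terminatedAt_of_irrational {α : ℝ} (hα : Irrational α) (n : ℕ) :
    ¬ (GenContFract.of α).TerminatedAt n := by
  intro h
  obtain ⟨q, hq⟩ := (GenContFract.terminates_iff_rat α).1 ⟨n, h⟩
  exact hα ⟨q, hq.symm⟩

lemma one_le_cfDen {α : ℝ} (hα : Irrational α) (n : ℕ) : 1 ≤ cfDen α n := by
  have h := GenContFract.succ_nth_fib_le_of_nth_den (v := α) (n := n)
    (Or.inr (not_terminatedAt_of_irrational hα _))
  have h' : (1 : ℝ) ≤ (Nat.fib (n + 1) : ℝ) := by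
    exact_mod_cast Nat.fib_pos.2 (Nat.succ_pos n)
  exact h'.trans h

lemma exists_nat_cfDen {α : ℝ} (hα : Irrational α) (n : ℕ) :
    ∃ q : ℕ, 0 < q ∧ cfDen α n = q := by
  obtain ⟨a, b, h⟩ := exists_int_contsAux α (n + 1)
  have hb : cfDen α n = (b : ℝ) := by
    rw [cfDen, GenContFract.den_eq_conts_b, GenContFract.nth_cont_eq_succ_nth_contAux, h]
  have hb1 : 1 ≤ b := by
    have := one_le_cfDen hα n
    rw [hb] at this
    exact_mod_cast this
  lift b to ℕ using by omega
  exact ⟨b, by omega, by simpa using hb⟩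

/-- The convergent estimate `|α - pₙ / qₙ| ≤ 1 / (qₙ qₙ₊₁)`, multiplied out. -/
lemma cfDen_succ_mul_intDist_le_one {α : ℝ} (hα : Irrational α) (n : ℕ) :
    cfDen α (n + 1) * intDist (cfDen α n * α) ≤ 1 := by
  obtain ⟨a, b, h⟩ := exists_int_contsAux α (n + 1)
  have hnum : (GenContFract.of α).nums n = (a : ℝ) := by
    rw [GenContFract.num_eq_conts_a, GenContFract.nth_cont_eq_succ_nth_contAux, h]
  have hA := GenContFract.abs_sub_convs_le (not_terminatedAt_of_irrational hα n)
  rw [GenContFract.conv_eq_num_div_den, hnum] at hA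
  have hq := one_le_cfDen hα n
  have hq' := one_le_cfDen hα (n + 1)
  change |α - a / cfDen α n| ≤ 1 / (cfDen α n * cfDen α (n + 1)) at hA
  generalize cfDen α n = q at *
  generalize cfDen α (n + 1) = q' at *
  have hq0 : 0 < q := by linarith
  have hq0' : 0 < q' := by linarith
  have h1 : intDist (q * α) ≤ |q * α - a| := round_le _ _
  have h2 : |q * α - a| = q * |α - a / q| := by
    rw [← abs_of_pos hq0, ← abs_mul, abs_of_pos hq0, mul_sub, mul_div_cancel₀ _ hq0.ne']
  calc q' * intDist (q * α) ≤ q' * (q * (1 / (q * q'))) := by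
        rw [h2] at h1
        gcongr
        exact h1.trans (by gcongr)
    _ = 1 := by field_simp

lemma hitTime_lt_iff_exists {X : Type*} [PseudoMetricSpace X] (T : X → X) (x x₀ : X) (r c : ℝ)
    (h : ((hitTime T x x₀ r : ℕ∞) : ℝ≥0∞) < ENNReal.ofReal c) :
    ∃ k : ℕ, (k : ℝ) < c ∧ T^[k] x ∈ Metric.ball x₀ r := by
  have hne : {N : ℕ∞ | ∃ n : ℕ, N = n ∧ 1 ≤ n ∧ T^[n] x ∈ Metric.ball x₀ r}.Nonempty := by
    by_contra hcon
    rw [Set.not_nonempty_iff_eq_empty] at hcon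
    rw [hitTime, hcon, sInf_empty] at h
    simp at h
  obtain ⟨k, hk, -, hkT⟩ := csInf_mem hne
  refine ⟨k, ?_, hkT⟩
  rw [hitTime, hk] at h
  by_contra! hcon
  refine absurd h (not_lt.2 ?_)
  calc ENNReal.ofReal c ≤ ENNReal.ofReal k := ENNReal.ofReal_le_ofReal hcon
    _ = _ := by simp

lemma addCircle_norm_coe_le (x : ℝ) : ‖(x : AddCircle (1 : ℝ))‖ ≤ |x| := by
  rw [AddCircle.norm_eq]
  simpa using round_le x 0

/-- The points reaching `B(0, r)` at a time below `c` have measure at most `q · 2r + c ‖qα‖`: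
the orbit segment of length `c` splits into `q` clusters, each drifting in steps of `‖qα‖`. -/
lemma volume_hit_le (α r c : ℝ) (hr : 0 < r) (hc : 0 ≤ c) (q : ℕ) (hq : 0 < q) :
    volume {x : AddCircle (1 : ℝ) |
        ((hitTime (fun y => y + (α : AddCircle (1 : ℝ))) x 0 r : ℕ∞) : ℝ≥0∞) < ENNReal.ofReal c}
      ≤ ENNReal.ofReal (q * (2 * r) + c * intDist (q * α)) := by
  have hq' : (0 : ℝ) < q := by exact_mod_cast hq
  set e : ℝ := q * α - round (q * α) with he
  have hδ : intDist (q * α) = |e| := rfl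
  have hsub : {x : AddCircle (1 : ℝ) |
      ((hitTime (fun y => y + (α : AddCircle (1 : ℝ))) x 0 r : ℕ∞) : ℝ≥0∞) < ENNReal.ofReal c} ⊆
      ⋃ a ∈ Finset.range q, closedBall (((-(a * α) - c / q * e / 2 : ℝ)) : AddCircle (1 : ℝ))
        (r + c / q * |e| / 2) := by
    intro x hx
    obtain ⟨k, hk, hkT⟩ := hitTime_lt_iff_exists _ _ _ _ _ hx
    rw [add_right_iterate, mem_ball_zero_iff] at hkT
    simp only [Set.mem_iUnion]
    refine ⟨k % q, Finset.mem_range.2 (Nat.mod_lt _ hq), ?_⟩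
    rw [mem_closedBall, dist_eq_norm]
    set b := k / q with hb
    have hk2 : (k : ℝ) = (k % q : ℕ) + q * b := by exact_mod_cast (Nat.mod_add_div k q).symm
    have hbc : (b : ℝ) ≤ c / q := by
      rw [le_div_iff₀ hq']
      have : (0 : ℝ) ≤ (k % q : ℕ) := by positivity
      nlinarith
    have hb0 : (0 : ℝ) ≤ b := by positivity
    -- `kα` and `(k % q) α + b e` differ by the integer `b * round (q α)`.
    have hz : (((b * round (q * α) : ℤ) : ℝ) : AddCircle (1 : ℝ)) = 0 :=
      AddCircle.coe_eq_zero_iff (1 : ℝ) |>.2 ⟨b * round (q * α), by simp⟩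
    have hkα : k • (α : AddCircle (1 : ℝ)) = (((k % q : ℕ) * α + b * e : ℝ) : AddCircle (1 : ℝ)) := by
      have h1 : (k : ℝ) * α = ((k % q : ℕ) * α + b * e) + ((b * round (q * α) : ℤ) : ℝ) := by
        push_cast
        rw [hk2, he]
        ring
      rw [← AddCircle.coe_nsmul, nsmul_eq_mul, h1, AddCircle.coe_add, hz, add_zero]
    have hdec : x - ((-((k % q : ℕ) * α) - c / q * e / 2 : ℝ) : AddCircle (1 : ℝ))
        = (x + k • (α : AddCircle (1 : ℝ))) + (((c / q / 2 - b) * e : ℝ) : AddCircle (1 : ℝ)) := by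
      rw [hkα, add_assoc, ← AddCircle.coe_add, sub_eq_add_neg, ← AddCircle.coe_neg]
      congr 2
      ring
    rw [hdec]
    refine (norm_add_le _ _).trans (add_le_add hkT.le ((addCircle_norm_coe_le _).trans ?_))
    rw [abs_mul]
    have : |c / q / 2 - b| ≤ c / q / 2 := abs_le.2 ⟨by linarith, by linarith⟩
    calc _ ≤ c / q / 2 * |e| := by gcongr
      _ = _ := by ring
  refine (measure_mono hsub).trans ((measure_biUnion_finset_le _ _).trans ?_)
  calc _ ≤ ∑ a ∈ Finset.range q, ENNReal.ofReal (2 * (r + c / q * |e| / 2)) := by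
        refine Finset.sum_le_sum fun a _ => ?_
        rw [AddCircle.volume_closedBall]
        exact ENNReal.ofReal_le_ofReal (min_le_right _ _)
    _ = ENNReal.ofReal (q * (2 * (r + c / q * |e| / 2))) := by
        rw [Finset.sum_const, Finset.card_range, nsmul_eq_mul, ENNReal.ofReal_mul hq'.le,
          ENNReal.ofReal_natCast]
    _ = _ := by
        rw [hδ]
        congr 1
        field_simp

/-- **Key lemma for circle rotations.** If `β, M, N ≥ 1` and
`‖qₙα‖ < M‖qₙα‖^{1/β} ≤ 2r ≤ (1/N)‖qₙ₋₁α‖ < ‖qₙ₋₁α‖`, then the set of points whose hitting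
time into `B(0,r)` is `< (2r)^{-β}` has measure at most `1/N + 1/M^β`. -/
theorem stmt_6 (α : ℝ) (hα : Irrational α) (β M N r : ℝ)
    (hβ : 1 ≤ β) (hM : 1 ≤ M) (hN : 1 ≤ N) (hr : 0 < r) (n : ℕ) (hn : 1 ≤ n)
    (h1 : intDist (cfDen α n * α) < M * intDist (cfDen α n * α) ^ (1/β))
    (h2 : M * intDist (cfDen α n * α) ^ (1/β) ≤ 2 * r)
    (h3 : 2 * r ≤ (1/N) * intDist (cfDen α (n-1) * α))
    (h4 : (1/N) * intDist (cfDen α (n-1) * α) < intDist (cfDen α (n-1) * α)) :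
    volume {x : AddCircle (1:ℝ) |
        ((hitTime (fun y => y + (α : AddCircle (1:ℝ))) x 0 r : ℕ∞) : ℝ≥0∞)
          < ENNReal.ofReal ((2 * r) ^ (-β))}
      ≤ ENNReal.ofReal (1/N + 1/M^β) := by
  obtain ⟨q, hq, hqn⟩ := exists_nat_cfDen hα n
  have hgap : (q : ℝ) * intDist (cfDen α (n - 1) * α) ≤ 1 := by
    have := cfDen_succ_mul_intDist_le_one hα (n - 1)
    rwa [Nat.sub_add_cancel hn, hqn] at this
  rw [hqn] at h2
  have hq' : (0 : ℝ) < q := by exact_mod_cast hq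
  have hβ0 : 0 < β := by linarith
  have hδ : 0 ≤ intDist (q * α) := abs_nonneg _
  refine (volume_hit_le α r _ hr (by positivity) q hq).trans
    (ENNReal.ofReal_le_ofReal (add_le_add ?_ ?_))
  · calc (q : ℝ) * (2 * r) ≤ q * (1 / N * intDist (cfDen α (n - 1) * α)) := by gcongr
      _ = 1 / N * (q * intDist (cfDen α (n - 1) * α)) := by ring
      _ ≤ 1 / N * 1 := by gcongr
      _ = 1 / N := mul_one _
  · have hpow : M ^ β * intDist (q * α) ≤ (2 * r) ^ β := by
      have h := Real.rpow_le_rpow (by positivity) h2 hβ0.le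
      rwa [Real.mul_rpow (by positivity) (by positivity), ← Real.rpow_mul hδ,
        one_div_mul_cancel hβ0.ne', Real.rpow_one] at h
    have hr' : 0 < (2 * r) ^ β := by positivity
    have hM' : 0 < M ^ β := by positivity
    rw [Real.rpow_neg (by positivity), inv_mul_eq_div, div_le_div_iff₀ hr' hM']
    linarith
end
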